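/- Let q be a prime power, let n ≥ 1, and let f(x) = Σ_{i=0}^{n−1} a_i x^{q^i} ∈ F_{q^n}[x]. Then f is scattered if and only if the polynomials H_0(y) and H_1(y) have no common root (in the algebraic closure of F_q, equivalently in F_{q^n}). -/

import Mathlib

/-- `H_m(y) ∈ F_{q^n}[y]`: the determinant of the `(n-m) × (n-m)` matrix obtained from
the matrix `H(y)` (the Dickson matrix of `f = ∑_{i=0}^{n-1} a_i x^{q^i}` with each
diagonal entry `a_0^{q^i}` replaced by `y^{q^i}`) by removing its first `m` columns and
last `m` rows. -/
noncomputable def Hpoly (q n m : ℕ) {F : Type*} [Field F] (a : ℕ → F) : Polynomial F :=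
  (Matrix.of fun i j : Fin (n - m) =>
      if i.val = j.val + m then Polynomial.X ^ q ^ i.val
      else Polynomial.C (a ((j.val + m + n - i.val) % n) ^ q ^ i.val)).det

/-!
For `z ∈ F` put `f_z(x) = f(x) - (a_0 - z) x`. Evaluating the matrix `H(y)` at `y = z` gives the
Dickson matrix `D` of `f_z`, so `H_0(z) = det D` and `H_1(z)` is, up to sign, an entry of the
adjugate of `D`. The isomorphism `F ⊗ F ≃ F^G`, where `G` is the Galois group of `F` over `F_q`,
turns the scalar extension of `f_z` into `D`, so `ker D` and `ker f_z` have the same dimension.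
If `D` is singular, its right kernel contains the vector `(g x)_g` of conjugates of a nonzero root
`x` of `f_z`, and so does its left kernel for another `x`, because the transpose of `D` is again a
Dickson matrix. These vectors have no zero coordinate, so a singular `D` has a zero entry in its
adjugate only if `dim ker D ≥ 2`. Hence `z` is a common root of `H_0` and `H_1` iff
`dim ker f_z ≥ 2`, which says that the map `x ↦ f(x) / x` on the points of the projective space of
`F` over `F_q` takes the value `a_0 - z` more than once.

This leaves the roots outside `F`. The polynomial `H_0` is monic, and its degree
`1 + q + ⋯ + q^{n-1}` is the number of points of that projective space. If `f` is scattered, the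
directions already provide this many roots of `H_0` in `F`, so `H_0` splits over `F`.
-/

section Adjugate

open Matrix

variable {n : Type*} [Fintype n] [DecidableEq n]

section Domain

variable {R : Type*} [CommRing R] [IsDomain R] {M : Matrix n n R}

theorem det_eq_zero_iff_ker_ne_bot : M.det = 0 ↔ M.mulVecLin.ker ≠ ⊥ := by
  rw [← exists_mulVec_eq_zero_iff, Submodule.ne_bot_iff]
  exact exists_congr fun _ => and_comm

theorem adjugate_apply_eq_zero_iff {h g : n} :
    M.adjugate h g = 0 ↔ ∃ w ≠ 0, w h = 0 ∧ ∀ i ≠ g, (M *ᵥ w) i = 0 := by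
  have mulVec_updateRow (w : n → R) (i : n) :
      (M.updateRow g (Pi.single h 1) *ᵥ w) i = if i = g then w h else (M *ᵥ w) i := by
    by_cases hi : i = g
    · subst hi
      simp [mulVec]
    · simp [mulVec, hi]
  rw [adjugate_apply, ← exists_mulVec_eq_zero_iff]
  refine exists_congr fun w => and_congr_right fun _ => ?_
  simp only [funext_iff, mulVec_updateRow, Pi.zero_apply]
  refine ⟨fun hw => ⟨by simpa using hw g, fun i hi => by simpa [hi] using hw i⟩, ?_⟩
  rintro ⟨hwh, hw⟩ i
  split_ifs with hi
  exacts [hwh, hw i hi]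

end Domain

section Field

variable {R : Type*} [Field R] {M : Matrix n n R}

theorem adjugate_eq_zero_of_one_lt_finrank_ker
    (hM : 1 < Module.finrank R M.mulVecLin.ker) : M.adjugate = 0 := by
  ext h g
  have hker : ((LinearMap.proj h : (n → R) →ₗ[R] R).domRestrict M.mulVecLin.ker).ker ≠ ⊥ :=
    LinearMap.ker_ne_bot_of_finrank_lt (by simpa using hM)
  obtain ⟨⟨w, hMw⟩, hwh, hw⟩ := Submodule.exists_mem_ne_zero_of_ne_bot hker
  refine adjugate_apply_eq_zero_iff.2 ⟨w, by simpa using hw, by simpa using hwh, fun i _ => ?_⟩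
  exact congrFun (LinearMap.mem_ker.1 hMw) i

theorem one_lt_finrank_ker_of_adjugate_apply_eq_zero {h g : n} {u v : n → R}
    (huM : u ᵥ* M = 0) (hug : u g ≠ 0) (hMv : M *ᵥ v = 0) (hvh : v h ≠ 0)
    (hM : M.adjugate h g = 0) : 1 < Module.finrank R M.mulVecLin.ker := by
  obtain ⟨w, hw, hwh, hMw⟩ := adjugate_apply_eq_zero_iff.1 hM
  have hMwg : u g * (M *ᵥ w) g = 0 := by
    calc u g * (M *ᵥ w) g = u ⬝ᵥ (M *ᵥ w) := by
          rw [dotProduct, Finset.sum_eq_single g (fun i _ hi => by rw [hMw i hi, mul_zero])]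
          simp
      _ = 0 := by rw [dotProduct_mulVec, huM, zero_dotProduct]
  have hw_ker : M *ᵥ w = 0 := by
    ext i
    obtain rfl | hi := eq_or_ne i g
    exacts [(mul_eq_zero.1 hMwg).resolve_left hug, hMw i hi]
  by_contra! hfinrank
  obtain ⟨⟨x, _⟩, hx⟩ := finrank_le_one_iff.1 hfinrank
  obtain ⟨c, hc⟩ := hx ⟨v, hMv⟩
  obtain ⟨d, hd⟩ := hx ⟨w, hw_ker⟩
  obtain rfl : c • x = v := congrArg Subtype.val hc
  obtain rfl : d • x = w := congrArg Subtype.val hd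
  simp_all

end Field

end Adjugate

section Finrank

open Module

theorem finrank_le_one_iff_forall_ne_zero {K V : Type*} [DivisionRing K] [AddCommGroup V]
    [Module K V] [FiniteDimensional K V] :
    finrank K V ≤ 1 ↔ ∀ x y : V, x ≠ 0 → ∃ t : K, t • x = y := by
  constructor
  · intro h x y hx
    have : Nontrivial V := ⟨x, 0, hx⟩
    exact (finrank_eq_one_iff_of_nonzero' x hx).1 (h.antisymm finrank_pos) y
  · intro h
    obtain _ | _ := subsingleton_or_nontrivial V
    · simp [finrank_zero_of_subsingleton]
    · obtain ⟨x, hx⟩ := exists_ne (0 : V)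
      exact finrank_le_one x fun y => h x y hx

theorem finrank_ker_baseChange {K V W : Type*} [Field K] [AddCommGroup V] [Module K V]
    [AddCommGroup W] [Module K W] (A : Type*) [CommRing A] [Nontrivial A] [Algebra K A]
    (f : V →ₗ[K] W) : finrank A (f.baseChange A).ker = finrank K f.ker := by
  rw [← finrank_baseChange (R := A) (M' := f.ker)]
  exact (LinearMap.tensorKerEquiv A A f).finrank_eq.symm

end Finrank

section Galois

open Matrix Module TensorProduct

variable {K L : Type*} [Field K] [Field L] [Algebra K L]

/-- The vector `(g x)_g` of Galois conjugates of `x`, as a `K`-linear map in `x`. It is the shape of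
the kernel vectors of a Dickson matrix that come from roots in `L`. -/
def galoisConjugates (K L : Type*) [Field K] [Field L] [Algebra K L] : L →ₗ[K] Gal(L/K) → L :=
  LinearMap.pi fun g => g.toLinearMap

@[simp]
theorem galoisConjugates_apply (x : L) (g : Gal(L/K)) : galoisConjugates K L x g = g x := rfl

/-- The Dickson matrix of the map `x ↦ ∑ g, b g * g x`, with rows and columns indexed by the Galois
group instead of the exponents of a generator. -/
def dicksonMatrix (b : Gal(L/K) → L) : Matrix Gal(L/K) Gal(L/K) L :=
  Matrix.of fun g h => g (b (g⁻¹ * h))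

theorem dicksonMatrix_transpose (b : Gal(L/K) → L) :
    (dicksonMatrix b)ᵀ = dicksonMatrix fun g => g (b g⁻¹) := by
  ext g h
  simp [dicksonMatrix, ← AlgEquiv.mul_apply]

variable [FiniteDimensional K L]

/-- The `K`-linear map `x ↦ ∑ g, b g * g x`. For finite fields these are the maps given by
`q`-polynomials. -/
noncomputable def linearizedMap (b : Gal(L/K) → L) : L →ₗ[K] L :=
  ∑ g, LinearMap.mulLeft K (b g) ∘ₗ g.toLinearMap

theorem linearizedMap_apply (b : Gal(L/K) → L) (x : L) :
    linearizedMap b x = ∑ g, b g * g x := by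
  simp [linearizedMap]

theorem linearizedMap_update_one [DecidableEq Gal(L/K)] (b : Gal(L/K) → L) (z : L) :
    linearizedMap (Function.update b 1 z) = linearizedMap b - LinearMap.mulLeft K (b 1 - z) := by
  ext x
  have update_eq : Function.update b 1 z = b - Pi.single 1 (b 1 - z) := by
    ext g
    obtain rfl | hg := eq_or_ne g 1 <;> simp [*]
  simp [linearizedMap_apply, update_eq, sub_mul, Finset.sum_sub_distrib, Pi.single_apply]

theorem dicksonMatrix_mulVec_galoisConjugates (b : Gal(L/K) → L) (x : L) :
    dicksonMatrix b *ᵥ galoisConjugates K L x = galoisConjugates K L (linearizedMap b x) := by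
  ext g
  simp only [mulVec, dotProduct, dicksonMatrix, of_apply, galoisConjugates_apply,
    linearizedMap_apply, map_sum, map_mul]
  exact Fintype.sum_equiv (Equiv.mulLeft g⁻¹) _ _ fun h => by simp [← AlgEquiv.mul_apply]

theorem span_range_galoisConjugates : Submodule.span L (Set.range (galoisConjugates K L)) = ⊤ := by
  have linearIndependent : LinearIndependent L fun (g : Gal(L/K)) (x : L) => g x :=
    (linearIndependent_monoidHom L L).comp (fun g : Gal(L/K) => (g : L →* L))
      fun _ _ hgh => AlgEquiv.ext (DFunLike.congr_fun (F := L →* L) hgh)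
  exact span_flip_eq_top_iff_linearIndependent.2 linearIndependent

variable [IsGalois K L]

theorem liftBaseChange_galoisConjugates_bijective :
    Function.Bijective ((galoisConjugates K L).liftBaseChange L) := by
  have surjective : Function.Surjective ((galoisConjugates K L).liftBaseChange L) := by
    rw [← LinearMap.range_eq_top, LinearMap.range_liftBaseChange, LinearMap.coe_range,
      span_range_galoisConjugates]
  have finrank_eq : finrank L (L ⊗[K] L) = finrank L (Gal(L/K) → L) := by
    rw [finrank_baseChange, finrank_fintype_fun_eq_card, ← Nat.card_eq_fintype_card,
      IsGalois.card_aut_eq_finrank]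
  exact ⟨(LinearMap.injective_iff_surjective_of_finrank_eq_finrank finrank_eq).2 surjective,
    surjective⟩

theorem finrank_ker_dicksonMatrix (b : Gal(L/K) → L) :
    finrank L (dicksonMatrix b).mulVecLin.ker = finrank K (linearizedMap b).ker := by
  let e : L ⊗[K] L ≃ₗ[L] (Gal(L/K) → L) :=
    .ofBijective _ liftBaseChange_galoisConjugates_bijective
  have intertwines : (dicksonMatrix b).mulVecLin ∘ₗ e.toLinearMap =
      e.toLinearMap ∘ₗ (linearizedMap b).baseChange L := by
    ext x : 3
    simp [e, dicksonMatrix_mulVec_galoisConjugates]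
  calc finrank L (dicksonMatrix b).mulVecLin.ker
      = finrank L ((dicksonMatrix b).mulVecLin.ker.map e.symm.toLinearMap) :=
        (e.symm.finrank_map_eq _).symm
    _ = finrank L ((linearizedMap b).baseChange L).ker := by
        rw [← Submodule.comap_equiv_eq_map_symm, ← LinearMap.ker_comp, intertwines,
          LinearEquiv.ker_comp]
    _ = finrank K (linearizedMap b).ker := finrank_ker_baseChange L _

variable [DecidableEq Gal(L/K)] {b : Gal(L/K) → L}

theorem det_dicksonMatrix_eq_zero_iff : (dicksonMatrix b).det = 0 ↔ (linearizedMap b).ker ≠ ⊥ := by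
  rw [det_eq_zero_iff_ker_ne_bot, ← Submodule.one_le_finrank_iff, finrank_ker_dicksonMatrix,
    Submodule.one_le_finrank_iff]

theorem exists_galoisConjugates_vecMul_dicksonMatrix_eq_zero (hb : (dicksonMatrix b).det = 0) :
    ∃ y ≠ 0, galoisConjugates K L y ᵥ* dicksonMatrix b = 0 := by
  rw [← det_transpose, dicksonMatrix_transpose, det_dicksonMatrix_eq_zero_iff,
    Submodule.ne_bot_iff] at hb
  obtain ⟨y, hy_ker, hy⟩ := hb
  refine ⟨y, hy, ?_⟩
  rw [← mulVec_transpose, dicksonMatrix_transpose, dicksonMatrix_mulVec_galoisConjugates,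
    LinearMap.mem_ker.1 hy_ker, map_zero]

theorem det_dicksonMatrix_eq_zero_and_adjugate_eq_zero_iff (g h : Gal(L/K)) :
    (dicksonMatrix b).det = 0 ∧ (dicksonMatrix b).adjugate g h = 0 ↔
      1 < finrank K (linearizedMap b).ker := by
  constructor
  · rintro ⟨hdet, hadjugate⟩
    obtain ⟨x, hx_ker, hx⟩ := (Submodule.ne_bot_iff _).1 (det_dicksonMatrix_eq_zero_iff.1 hdet)
    obtain ⟨y, hy, hy_vecMul⟩ := exists_galoisConjugates_vecMul_dicksonMatrix_eq_zero hdet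
    have hx_mulVec : dicksonMatrix b *ᵥ galoisConjugates K L x = 0 := by
      rw [dicksonMatrix_mulVec_galoisConjugates, LinearMap.mem_ker.1 hx_ker, map_zero]
    rw [← finrank_ker_dicksonMatrix]
    exact one_lt_finrank_ker_of_adjugate_apply_eq_zero hy_vecMul (by simpa using hy)
      hx_mulVec (by simpa using hx) hadjugate
  · intro hfinrank
    refine ⟨det_dicksonMatrix_eq_zero_iff.2 (Submodule.one_le_finrank_iff.1 hfinrank.le), ?_⟩
    rw [adjugate_eq_zero_of_one_lt_finrank_ker (by rwa [finrank_ker_dicksonMatrix]),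
      Matrix.zero_apply]

end Galois

section DominantDiagonal

open Polynomial

variable {n R : Type*} [Fintype n] [DecidableEq n] [CommRing R] {M : Matrix n n R[X]}

theorem degree_det_sub_prod_diag_lt
    (hM : ∀ i j, i ≠ j → (M i j).natDegree < (M i i).natDegree) :
    (M.det - ∏ i, M i i).degree < (∑ i, (M i i).natDegree : ℕ) := by
  have natDegree_le (i j) : (M i j).natDegree ≤ (M i i).natDegree := by
    obtain rfl | hij := eq_or_ne i j
    exacts [le_rfl, (hM i j hij).le]
  have natDegree_prod_lt (σ : Equiv.Perm n) (hσ : σ ≠ 1) :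
      (∏ i, M (σ i) i).natDegree < ∑ i, (M i i).natDegree := by
    obtain ⟨i, hi⟩ : ∃ i, σ i ≠ i := by simpa [Equiv.ext_iff] using hσ
    calc (∏ i, M (σ i) i).natDegree
        ≤ ∑ i, (M (σ i) i).natDegree := natDegree_prod_le ..
      _ < ∑ i, (M (σ i) (σ i)).natDegree :=
          Finset.sum_lt_sum (fun _ _ => natDegree_le ..) ⟨i, Finset.mem_univ i, hM _ _ hi⟩
      _ = ∑ i, (M i i).natDegree := Equiv.sum_comp σ fun i => (M i i).natDegree
  rw [Matrix.det_apply, ← Finset.add_sum_erase _ _ (Finset.mem_univ 1), Equiv.Perm.sign_one,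
    one_smul, add_sub_assoc]
  simp only [Equiv.Perm.one_apply, ← mem_degreeLT, add_sub_cancel]
  refine sum_mem fun σ hσ => ?_
  rw [Units.smul_def]
  refine zsmul_mem (mem_degreeLT.2 <| degree_le_natDegree.trans_lt ?_) _
  exact_mod_cast natDegree_prod_lt σ (Finset.ne_of_mem_erase hσ)

variable [Nontrivial R] (hmonic : ∀ i, (M i i).Monic)
  (hM : ∀ i j, i ≠ j → (M i j).natDegree < (M i i).natDegree)
include hmonic hM

theorem degree_det_sub_prod_diag_lt_degree_prod_diag :
    (M.det - ∏ i, M i i).degree < (∏ i, M i i).degree := by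
  rw [degree_eq_natDegree (monic_prod_of_monic _ _ fun i _ => hmonic i).ne_zero,
    natDegree_prod_of_monic _ _ fun i _ => hmonic i]
  exact degree_det_sub_prod_diag_lt hM

theorem monic_det_of_natDegree_lt_diag : M.det.Monic := by
  rw [← add_sub_cancel (∏ i, M i i) M.det]
  exact (monic_prod_of_monic _ _ fun i _ => hmonic i).add_of_left
    (degree_det_sub_prod_diag_lt_degree_prod_diag hmonic hM)

theorem natDegree_det_of_natDegree_lt_diag : M.det.natDegree = ∑ i, (M i i).natDegree := by
  rw [← natDegree_prod_of_monic _ _ fun i _ => hmonic i, ← add_sub_cancel (∏ i, M i i) M.det]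
  exact natDegree_add_eq_left_of_degree_lt
    (degree_det_sub_prod_diag_lt_degree_prod_diag hmonic hM)

end DominantDiagonal

section Hpoly

open Polynomial

variable {F : Type*} [Field F]

/-- The matrix `H(y)` whose determinant is `H_0` and whose minors are the other `H_m`: the Dickson
matrix of the `q`-polynomial with coefficients `a`, with the diagonal replaced by the powers
`y^{q^i}`. -/
noncomputable def Hmatrix (q n : ℕ) (a : ℕ → F) : Matrix (Fin n) (Fin n) F[X] :=
  Matrix.of fun i j =>
    if i = j then X ^ q ^ i.val else C (a ((j.val + n - i.val) % n) ^ q ^ i.val)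

theorem Hpoly_zero (q n : ℕ) (a : ℕ → F) : Hpoly q n 0 a = (Hmatrix q n a).det := by
  simp [Hpoly, Hmatrix, Fin.ext_iff]

theorem Hpoly_one (q k : ℕ) (a : ℕ → F) :
    Hpoly q (k + 1) 1 a = ((Hmatrix q (k + 1) a).submatrix Fin.castSucc Fin.succ).det := by
  simp [Hpoly, Hmatrix, Fin.ext_iff, Matrix.submatrix]

variable {q : ℕ} (hq : 0 < q) (n : ℕ) (a : ℕ → F)
include hq

theorem monic_Hpoly_zero : (Hpoly q n 0 a).Monic := by
  rw [Hpoly_zero]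
  refine monic_det_of_natDegree_lt_diag (fun i => ?_) fun i j hij => ?_
  · simp [Hmatrix, monic_X_pow]
  · simp [Hmatrix, hij, hq]

theorem natDegree_Hpoly_zero : (Hpoly q n 0 a).natDegree = ∑ i ∈ Finset.range n, q ^ i := by
  rw [Hpoly_zero, natDegree_det_of_natDegree_lt_diag, Finset.sum_range]
  · simp [Hmatrix]
  · simp [Hmatrix, monic_X_pow]
  · intro i j hij
    simp [Hmatrix, hij, hq]

end Hpoly

section Splits

open Polynomial

theorem splits_of_natDegree_le_ncard {F : Type*} [Field F] {P : F[X]} (hP : P ≠ 0) {s : Set F}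
    (hs : ∀ z ∈ s, P.IsRoot z) (hcard : P.natDegree ≤ s.ncard) : P.Splits := by
  classical
  rw [splits_iff_card_roots]
  refine (card_roots' P).antisymm (hcard.trans ?_)
  calc s.ncard ≤ (P.roots.toFinset : Set F).ncard :=
        Set.ncard_le_ncard (fun z hz => by simpa using ⟨hP, hs z hz⟩)
    _ ≤ P.roots.card := by
        rw [Set.ncard_coe_finset]
        exact Multiset.toFinset_card_le _

end Splits

section Frobenius

open Polynomial Module FiniteField Matrix

variable {K L : Type*} [Field K] [Fintype K] [Field L] [Finite L] [Algebra K L] {n : ℕ}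

/-- The enumeration `i ↦ (x ↦ x^{q^i})` of the Galois group of an extension of degree `n` of the
field with `q` elements. -/
noncomputable def frobeniusPowEquiv (hn : finrank K L = n) : Fin n ≃ Gal(L/K) :=
  (finCongr hn.symm).trans (.ofBijective _ (bijective_frobeniusAlgEquivOfAlgebraic_pow K L))

theorem frobeniusPowEquiv_eq_pow (hn : finrank K L = n) (i : Fin n) :
    frobeniusPowEquiv hn i = frobeniusAlgEquivOfAlgebraic K L ^ i.val := rfl

theorem frobeniusPowEquiv_apply (hn : finrank K L = n) (i : Fin n) (x : L) :
    frobeniusPowEquiv hn i x = x ^ Fintype.card K ^ i.val := by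
  rw [frobeniusPowEquiv_eq_pow, AlgEquiv.coe_pow, coe_frobeniusAlgEquivOfAlgebraic_iterate]

/-- The coefficients of the `q`-polynomial `∑ i, a_i x^{q^i}`, reindexed by the Galois group: `a_i`
is attached to `x ↦ x^{q^i}`. -/
noncomputable def frobeniusCoeff (hn : finrank K L = n) (a : ℕ → L) : Gal(L/K) → L :=
  fun g => a ((frobeniusPowEquiv hn).symm g)

theorem linearizedMap_frobeniusCoeff (hn : finrank K L = n) (a : ℕ → L) (x : L) :
    linearizedMap (frobeniusCoeff hn a) x =
      ∑ i ∈ Finset.range n, a i * x ^ Fintype.card K ^ i := by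
  rw [linearizedMap_apply, ← (frobeniusPowEquiv hn).sum_comp, Finset.sum_range]
  simp [frobeniusCoeff, frobeniusPowEquiv_apply]

variable {k : ℕ} (hn : finrank K L = k + 1) (a : ℕ → L)

theorem frobeniusPowEquiv_zero : frobeniusPowEquiv hn 0 = 1 := rfl

theorem frobeniusPowEquiv_add (i j : Fin (k + 1)) :
    frobeniusPowEquiv hn (i + j) = frobeniusPowEquiv hn i * frobeniusPowEquiv hn j := by
  have orderOf_eq : orderOf (frobeniusAlgEquivOfAlgebraic K L) = k + 1 := by
    rw [orderOf_frobeniusAlgEquivOfAlgebraic, hn]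
  simp only [frobeniusPowEquiv_eq_pow, ← pow_add, Fin.val_add]
  rw [← pow_mod_orderOf _ (i.val + j.val), orderOf_eq]

theorem frobeniusPowEquiv_inv_mul (i j : Fin (k + 1)) :
    (frobeniusPowEquiv hn i)⁻¹ * frobeniusPowEquiv hn j = frobeniusPowEquiv hn (j - i) := by
  rw [inv_mul_eq_iff_eq_mul, ← frobeniusPowEquiv_add, add_sub_cancel]

theorem frobeniusCoeff_one : frobeniusCoeff hn a 1 = a 0 := by
  simp [frobeniusCoeff, ← frobeniusPowEquiv_zero hn]

section Eval

variable [DecidableEq Gal(L/K)] (z : L)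

theorem map_eval_Hmatrix :
    (Hmatrix (Fintype.card K) (k + 1) a).map (eval z) =
      (dicksonMatrix (Function.update (frobeniusCoeff hn a) 1 z)).submatrix
        (frobeniusPowEquiv hn) (frobeniusPowEquiv hn) := by
  ext i j : 2
  simp only [map_apply, submatrix_apply, dicksonMatrix, of_apply, Hmatrix, frobeniusPowEquiv_apply,
    frobeniusPowEquiv_inv_mul]
  obtain rfl | hij := eq_or_ne i j
  · rw [sub_self]
    simp [frobeniusPowEquiv_zero]
  · have hne : frobeniusPowEquiv hn (j - i) ≠ 1 := by
      rwa [← frobeniusPowEquiv_zero hn, (frobeniusPowEquiv hn).injective.ne_iff, sub_ne_zero,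
        ne_comm]
    have hval : (j.val + (k + 1) - i.val) % (k + 1) = (j - i).val := by
      rw [Fin.sub_def]
      congr 1
      omega
    simp [hij, hne, frobeniusCoeff, hval]

theorem eval_Hpoly_zero :
    (Hpoly (Fintype.card K) (k + 1) 0 a).eval z =
      (dicksonMatrix (Function.update (frobeniusCoeff hn a) 1 z)).det := by
  rw [Hpoly_zero, ← coe_evalRingHom, RingHom.map_det, RingHom.mapMatrix_apply, coe_evalRingHom,
    map_eval_Hmatrix hn, det_submatrix_equiv_self]

theorem eval_Hpoly_one :
    (Hpoly (Fintype.card K) (k + 1) 1 a).eval z =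
      (-1) ^ k * (dicksonMatrix (Function.update (frobeniusCoeff hn a) 1 z)).adjugate
        (frobeniusPowEquiv hn 0) (frobeniusPowEquiv hn (Fin.last k)) := by
  rw [Hpoly_one, ← coe_evalRingHom, RingHom.map_det, RingHom.mapMatrix_apply, coe_evalRingHom,
    ← submatrix_map, map_eval_Hmatrix hn, ← submatrix_apply (adjugate _),
    ← adjugate_submatrix_equiv_self, adjugate_fin_succ_eq_det_submatrix, ← mul_assoc, ← pow_add]
  simp [Fin.succAbove_zero]

end Eval

theorem isRoot_Hpoly_zero_iff {z : L} :
    (Hpoly (Fintype.card K) (k + 1) 0 a).IsRoot z ↔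
      (linearizedMap (frobeniusCoeff hn a) - LinearMap.mulLeft K (a 0 - z)).ker ≠ ⊥ := by
  classical
  rw [IsRoot.def, eval_Hpoly_zero hn, det_dicksonMatrix_eq_zero_iff, linearizedMap_update_one,
    frobeniusCoeff_one]

theorem isRoot_Hpoly_zero_and_isRoot_Hpoly_one_iff {z : L} :
    (Hpoly (Fintype.card K) (k + 1) 0 a).IsRoot z ∧
        (Hpoly (Fintype.card K) (k + 1) 1 a).IsRoot z ↔
      1 < finrank K (linearizedMap (frobeniusCoeff hn a) - LinearMap.mulLeft K (a 0 - z)).ker := by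
  classical
  rw [IsRoot.def, IsRoot.def, eval_Hpoly_zero hn, eval_Hpoly_one hn, mul_eq_zero_iff_left (by simp),
    det_dicksonMatrix_eq_zero_and_adjugate_eq_zero_iff, linearizedMap_update_one,
    frobeniusCoeff_one]

end Frobenius

section Directions

open Module
open scoped LinearAlgebra.Projectivization

variable {K L : Type*} [Field K] [Field L] [Algebra K L]

/-- The direction `f x / x` of the point `⟨x⟩` of the projective space of `L` over `K`. The
polynomial of `f` is scattered iff this map is injective. -/
def direction (f : L →ₗ[K] L) : ℙ K L → L :=
  Projectivization.lift (fun x => f x / x) <| by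
    rintro ⟨x, hx⟩ ⟨y, hy⟩ t (rfl : x = t • y)
    have ht : algebraMap K L t ≠ 0 := by simpa using (smul_ne_zero_iff.1 hx).1
    change f (t • y) / (t • y) = f y / y
    rw [map_smul, Algebra.smul_def, Algebra.smul_def, mul_div_mul_left _ _ ht]

variable {f : L →ₗ[K] L}

@[simp]
theorem direction_mk {x : L} (hx : x ≠ 0) : direction f (.mk K x hx) = f x / x := rfl

theorem range_direction : Set.range (direction f) = {c | ∃ x ≠ 0, f x = c * x} := by
  ext c
  constructor
  · rintro ⟨⟨x, hx⟩, rfl⟩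
    exact ⟨x, hx, (div_mul_cancel₀ _ hx).symm⟩
  · rintro ⟨x, hx, hc⟩
    exact ⟨.mk K x hx, by rw [direction_mk, hc, mul_div_cancel_right₀ c hx]⟩

theorem mem_ker_sub_mulLeft {c x : L} : x ∈ (f - LinearMap.mulLeft K c).ker ↔ f x = c * x := by
  simp [sub_eq_zero]

theorem direction_injective_iff [FiniteDimensional K L] :
    Function.Injective (direction f) ↔ ∀ c, finrank K (f - LinearMap.mulLeft K c).ker ≤ 1 := by
  simp only [finrank_le_one_iff_forall_ne_zero]
  constructor
  · rintro hf c ⟨x, hx_ker⟩ ⟨y, hy_ker⟩ hx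
    rw [ne_eq, Submodule.mk_eq_zero] at hx
    obtain rfl | hy := eq_or_ne y 0
    · exact ⟨0, Subtype.ext (zero_smul K x)⟩
    have direction_eq : direction f (.mk K y hy) = direction f (.mk K x hx) := by
      rw [mem_ker_sub_mulLeft] at hx_ker hy_ker
      rw [direction_mk, direction_mk, hx_ker, hy_ker, mul_div_cancel_right₀ c hx,
        mul_div_cancel_right₀ c hy]
    obtain ⟨t, ht⟩ := (Projectivization.mk_eq_mk_iff' ..).1 (hf direction_eq)
    exact ⟨t, Subtype.ext ht⟩
  · rintro h ⟨y, hy⟩ ⟨x, hx⟩ direction_eq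
    have hx_ker : x ∈ (f - LinearMap.mulLeft K (f y / y)).ker := by
      rw [mem_ker_sub_mulLeft, show f y / y = f x / x from direction_eq, div_mul_cancel₀ _ hx]
    have hy_ker : y ∈ (f - LinearMap.mulLeft K (f y / y)).ker := by
      rw [mem_ker_sub_mulLeft, div_mul_cancel₀ _ hy]
    obtain ⟨t, ht⟩ := h _ ⟨x, hx_ker⟩ ⟨y, hy_ker⟩ (by simpa using hx)
    exact (Projectivization.mk_eq_mk_iff' ..).2 ⟨t, congrArg Subtype.val ht⟩

theorem natCard_directions_eq_natCard_projectivization_iff [Finite L] :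
    Nat.card {c // ∃ x, x ≠ 0 ∧ f x = c * x} = Nat.card (ℙ K L) ↔
      Function.Injective (direction f) := by
  rw [← Set.injOn_univ, ← Set.ncard_image_iff, Set.image_univ, range_direction, Set.ncard_univ]
  rfl

end Directions

section Scattered

open Module

variable {K L : Type*} [Field K] [Fintype K] [Field L] [Finite L] [Algebra K L] {k : ℕ}
  {a : ℕ → L} (hn : finrank K L = k + 1)

theorem direction_injective_iff_forall_not_isRoot :
    Function.Injective (direction (linearizedMap (frobeniusCoeff hn a))) ↔
      ∀ z, ¬((Hpoly (Fintype.card K) (k + 1) 0 a).IsRoot z ∧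
        (Hpoly (Fintype.card K) (k + 1) 1 a).IsRoot z) := by
  rw [direction_injective_iff, (Equiv.subLeft (a 0)).surjective.forall]
  refine forall_congr' fun z => ?_
  rw [Equiv.subLeft_apply, isRoot_Hpoly_zero_and_isRoot_Hpoly_one_iff hn, not_lt]

theorem splits_Hpoly_zero
    (hinj : Function.Injective (direction (linearizedMap (frobeniusCoeff hn a)))) :
    (Hpoly (Fintype.card K) (k + 1) 0 a).Splits := by
  set f := linearizedMap (frobeniusCoeff hn a)
  refine splits_of_natDegree_le_ncard (monic_Hpoly_zero Fintype.card_pos _ a).ne_zero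
    (s := (fun c => a 0 - c) '' Set.range (direction f)) ?_ (le_of_eq ?_)
  · rw [range_direction]
    rintro _ ⟨c, ⟨x, hx, hfx⟩, rfl⟩
    rw [isRoot_Hpoly_zero_iff hn, sub_sub_cancel, Submodule.ne_bot_iff]
    exact ⟨x, mem_ker_sub_mulLeft.2 hfx, hx⟩
  · rw [Set.ncard_image_of_injective _ sub_right_injective, Set.ncard_range_of_injective hinj,
      Projectivization.card_of_finrank K L hn, natDegree_Hpoly_zero Fintype.card_pos,
      Nat.card_eq_fintype_card]

end Scattered

theorem exists_subfield_natCard_eq {F : Type*} [Field F] [Fintype F] {q n : ℕ}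
    (hq : IsPrimePow q) (hF : Fintype.card F = q ^ n) :
    ∃ K : Subfield F, Nat.card K = q ∧ Module.finrank K F = n := by
  obtain ⟨p, e, hp, he, rfl⟩ := (isPrimePow_nat_iff q).1 hq
  have : Fact p.Prime := ⟨hp⟩
  have : CharP F p := charP_of_card_eq_prime_pow (hF.trans (pow_mul p e n).symm)
  let _ : Algebra (ZMod p) F := ZMod.algebra F p
  have finrank_eq : Module.finrank (ZMod p) F = e * n := by
    rw [← Nat.pow_right_inj hp.one_lt, FiniteField.pow_finrank_eq_natCard,
      Nat.card_eq_fintype_card, hF, pow_mul]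
  obtain ⟨f⟩ : Nonempty (GaloisField p e →ₐ[ZMod p] F) :=
    FiniteField.nonempty_algHom_of_finrank_dvd <| by
      rw [GaloisField.finrank p he.ne', finrank_eq]
      exact dvd_mul_right e n
  have natCard_eq : Nat.card f.fieldRange.toSubfield = p ^ e :=
    (Nat.card_range_of_injective f.injective).trans (GaloisField.card p e he.ne')
  refine ⟨f.fieldRange.toSubfield, natCard_eq, ?_⟩
  rw [← Nat.pow_right_inj hq.one_lt, ← natCard_eq, ← Module.natCard_eq_pow_finrank, natCard_eq,
    Nat.card_eq_fintype_card, hF]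

/-- Corollary (part 3): `f = ∑_{i=0}^{n-1} a_i x^{q^i} ∈ F_{q^n}[x]` is scattered (i.e.
the set of directions `{f(x)/x : x ≠ 0}`, equivalently `{c : ∃ x ≠ 0, f(x) = c·x}`, has
size `(q^n - 1)/(q - 1)`) if and only if `H_0(y)` and `H_1(y)` have no common root in
the algebraic closure of `F_q` (equivalently, in `F_{q^n}`). -/
theorem stmt_14 (p e q n : ℕ) (hp : p.Prime) (he : 0 < e) (hq : q = p ^ e)
    (hn : 0 < n) (F : Type*) [Field F] [Fintype F] (hF : Fintype.card F = q ^ n)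
    (a : ℕ → F) :
    Nat.card {c : F // ∃ x : F, x ≠ 0 ∧ ∑ i ∈ Finset.range n, a i * x ^ q ^ i = c * x}
        = (q ^ n - 1) / (q - 1) ↔
      ¬ ∃ z : AlgebraicClosure F,
          Polynomial.aeval z (Hpoly q n 0 a) = 0 ∧ Polynomial.aeval z (Hpoly q n 1 a) = 0 := by
  have hq_primePow : IsPrimePow q := hq ▸ hp.isPrimePow.pow he.ne'
  obtain ⟨K, rfl, hfinrank⟩ := exists_subfield_natCard_eq hq_primePow hF
  obtain ⟨k, rfl⟩ := Nat.exists_eq_succ_of_ne_zero hn.ne'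
  have := Fintype.ofFinite K
  rw [← hF, ← Nat.card_eq_fintype_card, ← Projectivization.card'',
    Nat.card_eq_fintype_card (α := K)]
  simp_rw [← linearizedMap_frobeniusCoeff hfinrank a]
  rw [natCard_directions_eq_natCard_projectivization_iff]
  constructor
  · rintro hinj ⟨z, hz₀, hz₁⟩
    obtain ⟨w, rfl⟩ : z ∈ (algebraMap F (AlgebraicClosure F)).range :=
      (splits_Hpoly_zero hfinrank hinj).mem_range_of_isRoot
        (monic_Hpoly_zero Fintype.card_pos _ a).ne_zero
        (by rwa [Polynomial.IsRoot.def, Polynomial.eval_map_algebraMap])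
    rw [Polynomial.aeval_algebraMap_eq_zero_iff, Polynomial.coe_aeval_eq_eval] at hz₀ hz₁
    exact (direction_injective_iff_forall_not_isRoot hfinrank).1 hinj w ⟨hz₀, hz₁⟩
  · rw [direction_injective_iff_forall_not_isRoot]
    rintro hroots w ⟨hw₀, hw₁⟩
    refine hroots ⟨algebraMap F _ w, ?_, ?_⟩ <;>
      rwa [Polynomial.aeval_algebraMap_eq_zero_iff, Polynomial.coe_aeval_eq_eval]
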